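/- arXiv:2506.05778 — 2 statements merged into one kernel-verified Lean document; each statement's English description precedes it below -/
import Mathlib

section
/- For every n ≥ 4, the abelianization of Γ_n^4 is isomorphic to (ℤ/2ℤ)^{N_n}, where N_n = C(n,3) − 1. -/
/-- Ordered quadruples of elements of `Fin n`, used to index the generators `(ijkl)`. -/
abbrev Quad (n : ℕ) : Type := Fin n × Fin n × Fin n × Fin n

/-- The underlying set `{i, j, k, l}` of a quadruple `(i, j, k, l)`. -/
def qFinset {n : ℕ} (q : Quad n) : Finset (Fin n) := {q.1, q.2.1, q.2.2.1, q.2.2.2}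

/-- The four entries of the quadruple are pairwise distinct. -/
def qDistinct {n : ℕ} (q : Quad n) : Prop := (qFinset q).card = 4

/-- The defining relators of the group `Γ_n^4` of Kim–Manturov:
generators indexed by quadruples of distinct elements (non-distinct quadruples are killed),
involutive relations (1), commutativity relations (2), pentagon relations (3) and dihedral
relations (4). -/
def gammaRels (n : ℕ) : Set (FreeGroup (Quad n)) :=
  {w | ∃ q : Quad n, ¬ qDistinct q ∧ w = FreeGroup.of q} ∪
  {w | ∃ q : Quad n, qDistinct q ∧ w = FreeGroup.of q * FreeGroup.of q} ∪
  {w | ∃ q r : Quad n, qDistinct q ∧ qDistinct r ∧ (qFinset q ∩ qFinset r).card ≤ 2 ∧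
      w = FreeGroup.of q * FreeGroup.of r * (FreeGroup.of q)⁻¹ * (FreeGroup.of r)⁻¹} ∪
  {w | ∃ i j k l m : Fin n, ({i, j, k, l, m} : Finset (Fin n)).card = 5 ∧
      w = FreeGroup.of (i, j, k, l) * FreeGroup.of (i, j, l, m) * FreeGroup.of (j, k, l, m) *
        FreeGroup.of (i, j, k, m) * FreeGroup.of (i, k, l, m)} ∪
  {w | ∃ i j k l : Fin n, qDistinct (i, j, k, l) ∧
      (w = FreeGroup.of (i, j, k, l) * (FreeGroup.of (j, k, l, i))⁻¹ ∨
       w = FreeGroup.of (i, j, k, l) * (FreeGroup.of (l, k, j, i))⁻¹)}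

/-- The group `Γ_n^4` of Kim–Manturov. -/
abbrev Gamma (n : ℕ) : Type := PresentedGroup (gammaRels n)

/-- The generator `(ijkl)` of `Γ_n^4`. -/
def gg {n : ℕ} (q : Quad n) : Gamma n := PresentedGroup.of q

/-!
In the abelianization the commutation relations are void and every generator squares to one, so
homomorphisms into a vector space `M` over `ℤ/2` are the functions `X i j k l` with the dihedral
symmetry of a quadrilateral that sum to zero around every pentagon. If `(ijkl)` is read as the flip
of the diagonal `ik` to `jl` inside a tetrahedron, such functions arise by adding a weight of the
four faces of `ijkl` to a weight of the two diagonals. Replacing the diagonal `ik` by the triple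
`oik` for a fixed point `o` makes one weight `P` on triples suffice.

Every `X` is obtained from exactly one `P` with `P {o, p, q} = 0`, where `p, q` are two further
points. The sums `X o a b c + X o a c b` satisfy the cocycle conditions that determine
`P {o, a, b}`; the remaining values are `P {a, b, c} = X o a b c + X o b c a + X o c a b`, and the
pentagons through `o` propagate the agreement of `X` with the function built from `P` to all
quadruples. The abelianization is therefore freely spanned over `ℤ/2` by the triples other than
`{o, p, q}`.
-/

theorem card_toFinset_eq_length_iff_nodup {α : Type*} [DecidableEq α] (l : List α) :
    l.toFinset.card = l.length ↔ l.Nodup :=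
  Multiset.toFinset_card_eq_card_iff_nodup (m := (l : Multiset α))

/-- The relations satisfied by the images of the generators `(ijkl)` in an abelian group, over an
arbitrary index type. As in `gammaRels`, the value at a quadruple with a repeated entry is zero. -/
structure IsFlipSystem {α M : Type*} [AddCommMonoid M] (X : α → α → α → α → M) : Prop where
  eq_zero_of_not_nodup {i j k l : α} : ¬ [i, j, k, l].Nodup → X i j k l = 0
  rotate (i j k l : α) : X i j k l = X j k l i
  reverse (i j k l : α) : X i j k l = X l k j i
  pentagon {i j k l m : α} : [i, j, k, l, m].Nodup →
    X i j k l + X i j l m + X j k l m + X i j k m + X i k l m = 0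

/-- The flip system with potential `P`: the sum of `P` over the four faces of the tetrahedron
`ijkl` and over its diagonals `ik` and `jl`, an edge `ab` being encoded as the triple `oab`. The
potential lives on all finsets; only its values on triples matter for a reduced cochain. -/
def flipCoboundary {α M : Type*} [DecidableEq α] [AddCommMonoid M] (o : α) (P : Finset α → M)
    (i j k l : α) : M :=
  if [i, j, k, l].Nodup then
    P {j, k, l} + P {i, k, l} + P {i, j, l} + P {i, j, k} + P {o, i, k} + P {o, j, l}
  else 0

/-- A weight on finsets which is supported on the triples other than `{o, p, q}`. These are the
normalized potentials of flip systems. -/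
def IsReducedCochain {α M : Type*} [DecidableEq α] [Zero M] (o p q : α) (P : Finset α → M) :
    Prop :=
  ∀ s, ¬ (s.card = 3 ∧ s ≠ {o, p, q}) → P s = 0

section Potential

theorem exists_finset_extension_of_symmetric {α M : Type*} [DecidableEq α] [Zero M]
    (F : α → α → α → M)
    (swap_left : ∀ a b c, [a, b, c].Nodup → F a b c = F b a c)
    (swap_right : ∀ a b c, [a, b, c].Nodup → F a b c = F a c b) :
    ∃ P : Finset α → M, (∀ s, s.card ≠ 3 → P s = 0) ∧
      ∀ a b c, [a, b, c].Nodup → P {a, b, c} = F a b c := by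
  have value_exists (s : Finset α) : ∃ m : M, (s.card ≠ 3 → m = 0) ∧
      ∀ a b c, [a, b, c].Nodup → s = {a, b, c} → m = F a b c := by
    by_cases hs : s.card = 3
    · obtain ⟨x, y, z, hxy, hxz, hyz, rfl⟩ := Finset.card_eq_three.1 hs
      refine ⟨F x y z, fun h => absurd hs h, fun a b c habc heq => ?_⟩
      have ha : a ∈ ({x, y, z} : Finset α) := by simp [heq]
      have hb : b ∈ ({x, y, z} : Finset α) := by simp [heq]
      have hc : c ∈ ({x, y, z} : Finset α) := by simp [heq]
      clear heq hs
      simp only [Finset.mem_insert, Finset.mem_singleton] at ha hb hc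
      simp only [List.nodup_cons, List.mem_cons, List.not_mem_nil] at habc swap_left swap_right
      grind
    · refine ⟨0, fun _ => rfl, fun a b c habc heq => absurd ?_ hs⟩
      grind [Finset.card_eq_three]
  choose P hP using value_exists
  exact ⟨P, fun s => (hP s).1, fun a b c habc => (hP _).2 a b c habc rfl⟩

variable {α M : Type*} [AddCommGroup M] [Module (ZMod 2) M]

theorem exists_edge_potential {S : Set α} {p q : α} (hp : p ∈ S) (hq : q ∈ S) (hpq : p ≠ q)
    (Y : α → α → α → M)
    (star : ∀ a ∈ S, ∀ b ∈ S, ∀ c ∈ S, ∀ d ∈ S, a ≠ b → a ≠ c → a ≠ d →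
      Y a b c + Y a c d = Y a b d)
    (triangle : ∀ a ∈ S, ∀ b ∈ S, ∀ c ∈ S, [a, b, c].Nodup → Y a b c + Y b c a + Y c a b = 0) :
    ∃ E : α → α → M, E p q = 0 ∧ (∀ a ∈ S, ∀ b ∈ S, a ≠ b → E a b = E b a) ∧
      ∀ a ∈ S, ∀ b ∈ S, ∀ c ∈ S, a ≠ b → a ≠ c → E a b + E a c = Y a b c := by
  classical
  have self {a b : α} (ha : a ∈ S) (hb : b ∈ S) (hab : a ≠ b) : Y a b b = 0 := by
    simpa using star a ha b hb b hb b hb hab hab hab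
  have comm {a b c : α} (ha : a ∈ S) (hb : b ∈ S) (hc : c ∈ S) (hab : a ≠ b) (hac : a ≠ c) :
      Y a b c = Y a c b := by
    rw [← sub_eq_zero, ZModModule.sub_eq_add, star a ha b hb c hc b hb hab hac hab,
      self ha hb hab]
  -- Moving from the edge `pq` to `pa` and on to `ab` changes the potential by these `Y`-values.
  let E (a b : α) : M := if a = p then Y p q b else Y p q a + Y a p b
  refine ⟨E, ?_, ?_, ?_⟩
  · simp only [E, if_true, self hp hq hpq]
  · intro a ha b hb hab
    by_cases hap : a = p
    · subst hap
      simp [E, hab.symm, self hb ha hab.symm]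
    by_cases hbp : b = p
    · subst hbp
      simp [E, hab, self ha hb hab]
    simp only [E, if_neg hap, if_neg hbp]
    have h₁ := star p hp q hq a ha b hb hpq (Ne.symm hap) (Ne.symm hbp)
    have h₂ := triangle p hp a ha b hb (by grind)
    have h₃ := comm ha hb hp hab hap
    -- Coefficients are compared in `ZMod 2`, so signs and doubled terms drop out.
    linear_combination (norm := (match_scalars <;> decide)) (1 : ZMod 2) • h₁ + h₂ + h₃
  · intro a ha b hb c hc hab hac
    by_cases hap : a = p
    · subst hap
      simp only [E, if_true]
      rw [comm ha hq hb hpq hab, star a ha b hb q hq c hc hab hpq hac]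
    · simp only [E, if_neg hap]
      have h₁ := star a ha b hb p hp c hc hab hap hac
      have h₂ := comm ha hp hb hap hab
      linear_combination (norm := (match_scalars <;> decide)) (1 : ZMod 2) • h₁ + h₂

end Potential

namespace IsFlipSystem

variable {α M : Type*} [AddCommGroup M] {X X' : α → α → α → α → M}

theorem reverse_tail (hX : IsFlipSystem X) (o a b c : α) : X o a b c = X o c b a := by
  rw [hX.reverse o a b c, ← hX.rotate o c b a]

theorem eq_of_eq_at_basepoint (hX : IsFlipSystem X) (hX' : IsFlipSystem X') (o : α)
    (h : ∀ a b c, [o, a, b, c].Nodup → X o a b c = X' o a b c) : X = X' := by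
  have eq_first (a b c : α) : X o a b c = X' o a b c := by
    by_cases hd : [o, a, b, c].Nodup
    · exact h a b c hd
    · rw [hX.eq_zero_of_not_nodup hd, hX'.eq_zero_of_not_nodup hd]
  funext i j k l
  by_cases hd : [o, i, j, k, l].Nodup
  · have hpent := (hX.pentagon hd).trans (hX'.pentagon hd).symm
    simpa only [eq_first, add_left_inj, add_right_inj] using hpent
  by_cases hd' : [i, j, k, l].Nodup
  · have ho : i = o ∨ j = o ∨ k = o ∨ l = o := by grind
    rcases ho with rfl | rfl | rfl | rfl
    · exact eq_first j k l
    · rw [hX.rotate, hX'.rotate, eq_first]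
    · rw [hX.rotate, hX.rotate, hX'.rotate, hX'.rotate j, eq_first]
    · rw [← hX.rotate, ← hX'.rotate, eq_first]
  · rw [hX.eq_zero_of_not_nodup hd', hX'.eq_zero_of_not_nodup hd']

variable [Module (ZMod 2) M]

theorem star_cocycle (hX : IsFlipSystem X) {o a b c d : α} (ho : o ∉ [a, b, c, d])
    (ha : a ∉ [b, c, d]) :
    (X o a b c + X o a c b) + (X o a c d + X o a d c) = X o a b d + X o a d b := by
  by_cases hd : [b, c, d].Nodup
  · have h₁ := hX.pentagon (i := o) (j := a) (k := b) (l := c) (m := d) (by grind)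
    have h₂ := hX.pentagon (i := o) (j := b) (k := c) (l := d) (m := a) (by grind)
    rw [hX.rotate a b c d] at h₁
    rw [hX.reverse_tail o b d a, hX.reverse_tail o b c a, hX.reverse_tail o c d a] at h₂
    linear_combination (norm := (match_scalars <;> decide)) (1 : ZMod 2) • h₁ + h₂
  · have h : b = c ∨ b = d ∨ c = d := by grind
    rcases h with rfl | rfl | rfl
    · rw [ZModModule.add_self, zero_add]
    · rw [add_comm (X o a c b), ZModModule.add_self, ZModModule.add_self]
    · rw [ZModModule.add_self, add_zero]

theorem star_triangle (hX : IsFlipSystem X) (o a b c : α) :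
    (X o a b c + X o a c b) + (X o b c a + X o b a c) + (X o c a b + X o c b a) = 0 := by
  rw [hX.reverse_tail o b c a, hX.reverse_tail o c a b, hX.reverse_tail o c b a]
  abel_nf
  simp only [two_zsmul, ZModModule.add_self]

theorem exists_potential_on_triples (hX : IsFlipSystem X) {o p q : α} (h : [o, p, q].Nodup) :
    ∃ F : α → α → α → M, F o p q = 0 ∧
      (∀ a b c, [a, b, c].Nodup → F a b c = F b a c) ∧
      (∀ a b c, [a, b, c].Nodup → F a b c = F a c b) ∧
      ∀ a b c, [o, a, b, c].Nodup → F a b c + F o b c + F o a b = X o a b c := by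
  classical
  obtain ⟨E, E_base, E_comm, E_add⟩ :=
    exists_edge_potential (S := {o}ᶜ) (p := p) (q := q)
      (by grind) (by grind) (by grind)
      (fun a b c => X o a b c + X o a c b)
      (fun a ha b hb c hc d hd hab hac had =>
        hX.star_cocycle (o := o) (a := a) (b := b) (c := c) (d := d) (by grind) (by grind))
      (fun a _ b _ c _ _ => hX.star_triangle o a b c)
  let F (a b c : α) : M :=
    if a = o then E b c else if b = o then E a c else if c = o then E a b
    else X o a b c + X o b c a + X o c a b
  refine ⟨F, ?_, ?_, ?_, ?_⟩
  · simpa [F] using E_base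
  · intro a b c habc
    have := hX.reverse_tail o a b c
    have := hX.reverse_tail o b c a
    have := hX.reverse_tail o c a b
    have := add_right_comm (X o a b c) (X o b c a) (X o c a b)
    simp only [List.nodup_cons, List.mem_cons, List.not_mem_nil] at habc
    grind
  · intro a b c habc
    have := hX.reverse_tail o a b c
    have := hX.reverse_tail o b c a
    have := hX.reverse_tail o c a b
    simp only [List.nodup_cons, List.mem_cons, List.not_mem_nil] at habc
    grind
  · intro a b c habc
    have hb := E_add b (by grind) a (by grind) c (by grind) (by grind) (by grind)
    have hab := E_comm a (by grind) b (by grind) (by grind)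
    have hF : F a b c = X o a b c + X o b c a + X o c a b := by grind
    have hF' : F o b c = E b c := by grind
    have hF'' : F o a b = E a b := by grind
    rw [hF, hF', hF'', hab, hX.reverse_tail o c a b]
    linear_combination (norm := (match_scalars <;> decide)) (1 : ZMod 2) • hb

end IsFlipSystem

section Coboundary

theorem map_flipCoboundary {α M N F : Type*} [DecidableEq α] [AddCommMonoid M] [AddCommMonoid N]
    [FunLike F M N] [AddMonoidHomClass F M N] (f : F) (o : α) (P : Finset α → M) (i j k l : α) :
    f (flipCoboundary o P i j k l) = flipCoboundary o (f ∘ P) i j k l := by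
  unfold flipCoboundary
  split_ifs <;> simp

variable {α M : Type*} [DecidableEq α] [AddCommGroup M]

theorem flipCoboundary_sub (o : α) (P Q : Finset α → M) (i j k l : α) :
    flipCoboundary o (P - Q) i j k l = flipCoboundary o P i j k l - flipCoboundary o Q i j k l := by
  unfold flipCoboundary
  split_ifs
  · simp only [Pi.sub_apply]
    abel
  · rw [sub_zero]

variable [Module (ZMod 2) M]

theorem isFlipSystem_flipCoboundary (o : α) (P : Finset α → M) :
    IsFlipSystem (flipCoboundary o P) where
  eq_zero_of_not_nodup h := if_neg h
  rotate i j k l := by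
    have hnodup : [i, j, k, l].Nodup ↔ [j, k, l, i].Nodup := by grind
    have cycle (a b c : α) : ({a, b, c} : Finset α) = {c, a, b} := by grind
    simp only [flipCoboundary, hnodup]
    rw [cycle k l i, cycle j l i, cycle j k i, Finset.pair_comm k i]
    congr 1
    abel
  reverse i j k l := by
    have hnodup : [i, j, k, l].Nodup ↔ [l, k, j, i].Nodup := by grind
    have mirror (a b c : α) : ({a, b, c} : Finset α) = {c, b, a} := by grind
    simp only [flipCoboundary, hnodup]
    rw [mirror k j i, mirror l j i, mirror l k i, mirror l k j, Finset.pair_comm l j,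
      Finset.pair_comm k i]
    congr 1
    abel
  pentagon {i j k l m} h := by
    unfold flipCoboundary
    rw [if_pos (by grind), if_pos (by grind), if_pos (by grind), if_pos (by grind),
      if_pos (by grind)]
    abel_nf
    simp only [two_zsmul, ZModModule.add_self]

theorem IsReducedCochain.flipCoboundary_basepoint {o p q : α} {P : Finset α → M}
    (hP : IsReducedCochain o p q P) {a b c : α} (h : [o, a, b, c].Nodup) :
    flipCoboundary o P o a b c = P {a, b, c} + P {o, b, c} + P {o, a, b} := by
  have degenerate : P {o, o, b} = 0 := hP _ (by grind)
  rw [flipCoboundary, if_pos h, degenerate]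
  linear_combination (norm := (match_scalars <;> decide))
    (1 : ZMod 2) • ZModModule.add_self (P {o, a, c})

theorem IsReducedCochain.eq_zero_of_flipCoboundary_eq_zero {o p q : α} (h : [o, p, q].Nodup)
    {P : Finset α → M} (hP : IsReducedCochain o p q P)
    (hzero : flipCoboundary o P = 0) : P = 0 := by
  have boundary {a b c : α} (habc : [o, a, b, c].Nodup) :
      P {a, b, c} + P {o, b, c} + P {o, a, b} = 0 := by
    rw [← hP.flipCoboundary_basepoint habc, hzero]
    rfl
  have star {a b c : α} (hab : [o, a, b].Nodup) (hac : [o, a, c].Nodup) :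
      P {o, a, b} = P {o, a, c} := by
    by_cases hbc : b = c
    · rw [hbc]
    have h₁ := boundary (a := a) (b := b) (c := c) (by grind)
    have h₂ := boundary (a := a) (b := c) (c := b) (by grind)
    rw [Finset.pair_comm c b] at h₂
    linear_combination (norm := (match_scalars <;> decide)) (1 : ZMod 2) • h₁ + h₂
  have edge {a b : α} (hab : [o, a, b].Nodup) : P {o, a, b} = 0 := by
    have base : P {o, p, q} = 0 := hP _ (by simp)
    by_cases hap : a = p
    · subst hap
      rw [star hab h, base]
    · rw [star hab (c := p) (by grind), Finset.pair_comm, star (c := q) (by grind) h, base]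
  funext s
  by_cases hs : s.card = 3
  · by_cases ho : o ∈ s
    · obtain ⟨a, b, hab, hs'⟩ : ∃ a b, a ≠ b ∧ s.erase o = {a, b} := by
        rw [← Finset.card_eq_two, Finset.card_erase_of_mem ho, hs]
      rw [← Finset.insert_erase ho, hs']
      exact edge (by grind)
    · obtain ⟨a, b, c, hab, hac, hbc, rfl⟩ := Finset.card_eq_three.1 hs
      have := boundary (a := a) (b := b) (c := c) (by grind)
      rwa [edge (by grind), edge (by grind), add_zero, add_zero] at this
  · exact hP s fun hs' => hs hs'.1

theorem IsReducedCochain.eq_of_flipCoboundary_eq {o p q : α} (h : [o, p, q].Nodup)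
    {P Q : Finset α → M} (hP : IsReducedCochain o p q P) (hQ : IsReducedCochain o p q Q)
    (hPQ : flipCoboundary o P = flipCoboundary o Q) : P = Q := by
  have hsub : IsReducedCochain o p q (P - Q) := fun s hs => by
    rw [Pi.sub_apply, hP s hs, hQ s hs, sub_zero]
  refine sub_eq_zero.1 (hsub.eq_zero_of_flipCoboundary_eq_zero h ?_)
  funext i j k l
  rw [flipCoboundary_sub, hPQ, sub_self]
  rfl

theorem IsFlipSystem.exists_potential {X : α → α → α → α → M} (hX : IsFlipSystem X) {o p q : α}
    (h : [o, p, q].Nodup) :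
    ∃ P : Finset α → M, IsReducedCochain o p q P ∧ flipCoboundary o P = X := by
  obtain ⟨F, F_base, swap_left, swap_right, hF⟩ := hX.exists_potential_on_triples h
  obtain ⟨P, P_card, P_eq⟩ := exists_finset_extension_of_symmetric F swap_left swap_right
  have hP : IsReducedCochain o p q P := by
    intro s hs
    by_cases hs' : s = {o, p, q}
    · rw [hs', P_eq o p q h, F_base]
    · exact P_card s fun hcard => hs ⟨hcard, hs'⟩
  refine ⟨P, hP, (isFlipSystem_flipCoboundary o P).eq_of_eq_at_basepoint hX o fun a b c habc => ?_⟩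
  rw [hP.flipCoboundary_basepoint habc, P_eq a b c (by grind), P_eq o b c (by grind),
    P_eq o a b (by grind), hF a b c habc]

end Coboundary

section ReducedTriple

variable {α : Type*} [DecidableEq α]

/-- The triples other than `{o, p, q}`, which index a basis of the abelianization. -/
abbrev ReducedTriple (o p q : α) : Type _ := {s : Finset α // s.card = 3 ∧ s ≠ {o, p, q}}

theorem card_reducedTriple [Fintype α] {o p q : α} (h : [o, p, q].Nodup) :
    Fintype.card (ReducedTriple o p q) = (Fintype.card α).choose 3 - 1 := by
  have filter_eq : ({s | s.card = 3 ∧ s ≠ {o, p, q}} : Finset (Finset α)) =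
      (Finset.powersetCard 3 Finset.univ).erase {o, p, q} := by
    ext s
    simp [and_comm]
  have mem : {o, p, q} ∈ Finset.powersetCard 3 (Finset.univ : Finset α) :=
    Finset.mem_powersetCard_univ.2 (by simpa using (card_toFinset_eq_length_iff_nodup _).2 h)
  rw [Fintype.card_subtype, filter_eq, Finset.card_erase_of_mem mem, Finset.card_powersetCard,
    Finset.card_univ]

/-- The universal reduced cochain: it sends a triple other than `{o, p, q}` to the corresponding
basis vector and every other finset to zero. -/
noncomputable def tripleSingle (o p q : α) (s : Finset α) : ReducedTriple o p q →₀ ZMod 2 :=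
  if h : s.card = 3 ∧ s ≠ {o, p, q} then Finsupp.single ⟨s, h⟩ 1 else 0

theorem isReducedCochain_tripleSingle (o p q : α) : IsReducedCochain o p q (tripleSingle o p q) :=
  fun _ hs => dif_neg hs

theorem tripleSingle_coe {o p q : α} (t : ReducedTriple o p q) :
    tripleSingle o p q t = Finsupp.single t 1 :=
  dif_pos t.2

theorem IsReducedCochain.linearCombination_comp_tripleSingle {M : Type*} [AddCommGroup M]
    [Module (ZMod 2) M] {o p q : α} {P : Finset α → M} (hP : IsReducedCochain o p q P) :
    Finsupp.linearCombination (ZMod 2) (fun t : ReducedTriple o p q => P t) ∘ tripleSingle o p q =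
      P := by
  funext s
  by_cases hs : s.card = 3 ∧ s ≠ {o, p, q}
  · rw [Function.comp_apply, tripleSingle_coe ⟨s, hs⟩, Finsupp.linearCombination_single, one_smul]
  · rw [Function.comp_apply, isReducedCochain_tripleSingle o p q s hs, map_zero, hP s hs]

end ReducedTriple

theorem qDistinct_iff_nodup {n : ℕ} {i j k l : Fin n} :
    qDistinct (i, j, k, l) ↔ [i, j, k, l].Nodup := by
  simpa [qDistinct, qFinset] using card_toFinset_eq_length_iff_nodup [i, j, k, l]

theorem card_eq_five_iff_nodup {α : Type*} [DecidableEq α] {i j k l m : α} :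
    ({i, j, k, l, m} : Finset α).card = 5 ↔ [i, j, k, l, m].Nodup := by
  simpa using card_toFinset_eq_length_iff_nodup [i, j, k, l, m]

theorem IsFlipSystem.freeGroupLift_eq_one {n : ℕ} {M : Type*} [AddCommGroup M] [Module (ZMod 2) M]
    {X : Fin n → Fin n → Fin n → Fin n → M} (hX : IsFlipSystem X) {w : FreeGroup (Quad n)}
    (hw : w ∈ gammaRels n) :
    FreeGroup.lift (fun (i, j, k, l) => Multiplicative.ofAdd (X i j k l)) w = 1 := by
  rcases hw with (((⟨⟨i, j, k, l⟩, h, rfl⟩ | ⟨⟨i, j, k, l⟩, -, rfl⟩) | ⟨q, r, -, -, -, rfl⟩) |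
    ⟨i, j, k, l, m, h, rfl⟩) | ⟨i, j, k, l, -, rfl | rfl⟩
  · rw [FreeGroup.lift_apply_of]
    exact hX.eq_zero_of_not_nodup fun h' => h (qDistinct_iff_nodup.2 h')
  · rw [map_mul, FreeGroup.lift_apply_of]
    exact ZModModule.add_self (X i j k l)
  · rw [← commutatorElement_def, map_commutatorElement, commutatorElement_eq_one_iff_mul_comm,
      mul_comm]
  · simp only [map_mul, FreeGroup.lift_apply_of]
    exact hX.pentagon (card_eq_five_iff_nodup.1 h)
  · rw [map_mul, map_inv, mul_inv_eq_one, FreeGroup.lift_apply_of, FreeGroup.lift_apply_of]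
    exact hX.rotate i j k l
  · rw [map_mul, map_inv, mul_inv_eq_one, FreeGroup.lift_apply_of, FreeGroup.lift_apply_of]
    exact hX.reverse i j k l

/-- The abelianization of `Γ_n^4`, written additively. -/
abbrev GammaAb (n : ℕ) : Type := Additive (Abelianization (Gamma n))

namespace GammaAb

variable {n : ℕ}

/-- The class of the generator `(ijkl)` in the abelianization. -/
def gen (i j k l : Fin n) : GammaAb n := Additive.ofMul (Abelianization.of (gg (i, j, k, l)))

theorem addHom_ext {M : Type*} [AddCommGroup M] {f g : GammaAb n →+ M}
    (h : ∀ i j k l, f (gen i j k l) = g (gen i j k l)) : f = g := by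
  apply AddMonoidHom.toMultiplicativeRight.injective
  apply Abelianization.hom_ext
  apply PresentedGroup.ext
  rintro ⟨i, j, k, l⟩
  exact h i j k l

theorem ofMul_of_mk_eq_zero {w : FreeGroup (Quad n)} (hw : w ∈ gammaRels n) :
    (Additive.ofMul (Abelianization.of (PresentedGroup.mk (gammaRels n) w)) : GammaAb n) = 0 := by
  rw [PresentedGroup.one_of_mem hw, map_one, ofMul_one]

theorem gen_eq_zero_of_not_nodup {i j k l : Fin n} (h : ¬ [i, j, k, l].Nodup) :
    gen i j k l = 0 :=
  ofMul_of_mk_eq_zero (w := FreeGroup.of (i, j, k, l))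
    (.inl (.inl (.inl (.inl ⟨_, mt qDistinct_iff_nodup.1 h, rfl⟩))))

theorem gen_add_self (i j k l : Fin n) : gen i j k l + gen i j k l = 0 := by
  by_cases h : [i, j, k, l].Nodup
  · exact ofMul_of_mk_eq_zero (w := FreeGroup.of (i, j, k, l) * FreeGroup.of (i, j, k, l))
      (.inl (.inl (.inl (.inr ⟨_, qDistinct_iff_nodup.2 h, rfl⟩))))
  · rw [gen_eq_zero_of_not_nodup h, add_zero]

theorem two_nsmul_eq_zero (x : GammaAb n) : 2 • x = 0 := by
  have double_eq_zero : (2 • AddMonoidHom.id (GammaAb n)) = 0 :=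
    addHom_ext fun i j k l => (two_nsmul _).trans (gen_add_self i j k l)
  exact DFunLike.congr_fun double_eq_zero x

instance : Module (ZMod 2) (GammaAb n) := AddCommGroup.zmodModule two_nsmul_eq_zero

theorem isFlipSystem_gen : IsFlipSystem (gen (n := n)) where
  eq_zero_of_not_nodup := gen_eq_zero_of_not_nodup
  rotate i j k l := by
    by_cases h : [i, j, k, l].Nodup
    · exact add_neg_eq_zero.1 (ofMul_of_mk_eq_zero
        (w := FreeGroup.of (i, j, k, l) * (FreeGroup.of (j, k, l, i))⁻¹)
        (.inr ⟨i, j, k, l, qDistinct_iff_nodup.2 h, .inl rfl⟩))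
    · rw [gen_eq_zero_of_not_nodup h, gen_eq_zero_of_not_nodup (by grind)]
  reverse i j k l := by
    by_cases h : [i, j, k, l].Nodup
    · exact add_neg_eq_zero.1 (ofMul_of_mk_eq_zero
        (w := FreeGroup.of (i, j, k, l) * (FreeGroup.of (l, k, j, i))⁻¹)
        (.inr ⟨i, j, k, l, qDistinct_iff_nodup.2 h, .inr rfl⟩))
    · rw [gen_eq_zero_of_not_nodup h, gen_eq_zero_of_not_nodup (by grind)]
  pentagon {i j k l m} h :=
    ofMul_of_mk_eq_zero
      (.inl (.inr ⟨i, j, k, l, m, card_eq_five_iff_nodup.2 h, rfl⟩))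

section Lift

variable {M : Type*} [AddCommGroup M] [Module (ZMod 2) M]

theorem linearMap_ext {f g : GammaAb n →ₗ[ZMod 2] M}
    (h : ∀ i j k l, f (gen i j k l) = g (gen i j k l)) : f = g :=
  LinearMap.toAddMonoidHom_injective (addHom_ext h)

/-- The linear map out of the abelianization induced by a flip system, through which the
abelianization carries the universal flip system `gen`. -/
def lift {X : Fin n → Fin n → Fin n → Fin n → M} (hX : IsFlipSystem X) :
    GammaAb n →ₗ[ZMod 2] M :=
  (MonoidHom.toAdditiveLeft (Abelianization.lift
    (PresentedGroup.toGroup fun _ => hX.freeGroupLift_eq_one))).toZModLinearMap 2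

theorem lift_gen {X : Fin n → Fin n → Fin n → Fin n → M} (hX : IsFlipSystem X)
    (i j k l : Fin n) : lift hX (gen i j k l) = X i j k l := by
  change Multiplicative.toAdd (Abelianization.lift
    (PresentedGroup.toGroup fun _ => hX.freeGroupLift_eq_one)
      (Abelianization.of (PresentedGroup.of (i, j, k, l)))) = _
  rw [Abelianization.lift_apply_of, PresentedGroup.toGroup.of, toAdd_ofAdd]

end Lift

theorem nonempty_linearEquiv_reducedTriple {o p q : Fin n} (h : [o, p, q].Nodup) :
    Nonempty (GammaAb n ≃ₗ[ZMod 2] ReducedTriple o p q →₀ ZMod 2) := by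
  obtain ⟨P, hP, P_gen⟩ := isFlipSystem_gen.exists_potential h
  let toTriples := lift (isFlipSystem_flipCoboundary o (tripleSingle o p q))
  let ofTriples := Finsupp.linearCombination (ZMod 2) (fun t : ReducedTriple o p q => P t)
  have toTriples_potential : toTriples ∘ P = tripleSingle o p q := by
    have reduced : IsReducedCochain o p q (toTriples ∘ P) := fun s hs => by
      rw [Function.comp_apply, hP s hs, map_zero]
    refine reduced.eq_of_flipCoboundary_eq h (isReducedCochain_tripleSingle o p q) ?_
    funext i j k l
    rw [← map_flipCoboundary, P_gen, lift_gen]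
  refine ⟨LinearEquiv.ofLinearMap toTriples ofTriples ?_ ?_⟩
  · refine Finsupp.lhom_ext' fun t => LinearMap.ext_ring ?_
    simpa [ofTriples, tripleSingle_coe] using congrFun toTriples_potential t
  · refine linearMap_ext fun i j k l => ?_
    rw [LinearMap.comp_apply, lift_gen, map_flipCoboundary,
      hP.linearCombination_comp_tripleSingle, P_gen, LinearMap.id_apply]

end GammaAb

/-- For every `n ≥ 4`, the abelianization of `Γ_n^4` is isomorphic to `(ℤ/2ℤ)^{N_n}`,
where `N_n = C(n,3) - 1`. -/
theorem gamma_abelianization (n : ℕ) (hn : 4 ≤ n) :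
    Nonempty (Abelianization (Gamma n) ≃* Multiplicative (Fin (n.choose 3 - 1) → ZMod 2)) := by
  let o : Fin n := ⟨0, by lia⟩
  let p : Fin n := ⟨1, by lia⟩
  let q : Fin n := ⟨2, by lia⟩
  have hopq : [o, p, q].Nodup := by simp [o, p, q]
  obtain ⟨basis⟩ := GammaAb.nonempty_linearEquiv_reducedTriple hopq
  have card_eq : Fintype.card (ReducedTriple o p q) = n.choose 3 - 1 := by
    rw [card_reducedTriple hopq, Fintype.card_fin]
  let coordinates : GammaAb n ≃ₗ[ZMod 2] (Fin (n.choose 3 - 1) → ZMod 2) :=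
    basis ≪≫ₗ Finsupp.domLCongr (Fintype.equivFinOfCardEq card_eq) ≪≫ₗ
      Finsupp.linearEquivFunOnFinite (ZMod 2) (ZMod 2) _
  exact ⟨AddEquiv.toMultiplicativeRight coordinates.toAddEquiv⟩
end

section
/- The group Δ_5^4 has a subgroup G of index 2 whose abelianization is isomorphic to ℤ² ⊕ ℤ/2ℤ; consequently, Δ_5^4 is an infinite non-commutative group. -/
/-- The quadruple `(i, j, k, l)` is strictly increasing: `i < j < k < l`. -/
def qInc {n : ℕ} (q : Quad n) : Prop := q.1 < q.2.1 ∧ q.2.1 < q.2.2.1 ∧ q.2.2.1 < q.2.2.2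

/-- The defining relators of the group `Δ_n^4` (the increasing-order version of `Γ_n^4`):
generators indexed by strictly increasing quadruples (other quadruples are killed),
involutive relations (1), commutativity relations (2) and pentagon relations (3) for
`i < j < k < l < m`. -/
def deltaRels (n : ℕ) : Set (FreeGroup (Quad n)) :=
  {w | ∃ q : Quad n, ¬ qInc q ∧ w = FreeGroup.of q} ∪
  {w | ∃ q : Quad n, qInc q ∧ w = FreeGroup.of q * FreeGroup.of q} ∪
  {w | ∃ q r : Quad n, qInc q ∧ qInc r ∧ (qFinset q ∩ qFinset r).card ≤ 2 ∧
      w = FreeGroup.of q * FreeGroup.of r * (FreeGroup.of q)⁻¹ * (FreeGroup.of r)⁻¹} ∪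
  {w | ∃ i j k l m : Fin n, i < j ∧ j < k ∧ k < l ∧ l < m ∧
      w = FreeGroup.of (i, j, k, l) * FreeGroup.of (i, j, l, m) * FreeGroup.of (j, k, l, m) *
        FreeGroup.of (i, j, k, m) * FreeGroup.of (i, k, l, m)}

/-- The group `Δ_n^4`, the increasing-order version of `Γ_n^4`. -/
abbrev Delta (n : ℕ) : Type := PresentedGroup (deltaRels n)

/-- The generator `(ijkl)` of `Δ_n^4`. -/
def dd {n : ℕ} (q : Quad n) : Delta n := PresentedGroup.of q

/-!
Let `A, B, C, D, E` be the generators `(1234)`, `(1245)`, `(2345)`, `(1235)`, `(1345)`, so that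
`ABCDE = 1`. Sending `A, B, C, D` to reflections and `E` to a translation maps `Δ_5^4` onto the
generalized dihedral group of `ℤ² × ℤ/2ℤ`, the images of `AB`, `AC` and `E` being the standard
generators of the translation part. Let `G` be the preimage of the translations.
In the quotient by `⁅G, G⁆`, conjugation by `A` inverts the commuting elements `AB`, `AC`, `AD`,
hence also `E⁻¹ = (AB)(AC)⁻¹(AD)`; so the generalized dihedral group maps back to that quotient,
and the composite is the quotient map. Therefore the kernel of the first map lies in `⁅G, G⁆`, and
the abelianization of `G` is the translation part.
-/

open SemidirectProduct

section Involutions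

variable {H : Type*} [Group H]

lemma semiconjBy_mul_inv_of_mul_self {a b : H} (ha : a * a = 1) (hb : b * b = 1) :
    SemiconjBy a (a * b) (a * b)⁻¹ := by
  rw [SemiconjBy, mul_inv_rev, inv_eq_of_mul_eq_one_left ha, inv_eq_of_mul_eq_one_left hb,
    ← mul_assoc, ha, one_mul, mul_assoc, ha, mul_one]

/-- The homomorphism from the two-element group `ℤˣ` determined by an involution. -/
def intUnitsLift (a : H) (ha : a * a = 1) : ℤˣ →* H where
  toFun u := if u = 1 then 1 else a
  map_one' := if_pos rfl
  map_mul' u v := by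
    rcases Int.units_eq_one_or u with rfl | rfl <;> rcases Int.units_eq_one_or v with rfl | rfl <;>
      simp [ha]

@[simp]
lemma intUnitsLift_neg_one (a : H) (ha : a * a = 1) : intUnitsLift a ha (-1) = a := by
  simp [intUnitsLift]

/-- The elements of a commutative group whose images under `φ` are inverted by conjugation
by `a`. -/
def invertedSubgroup {M : Type*} [CommGroup M] (φ : M →* H) (a : H) : Subgroup M where
  carrier := {m | SemiconjBy a (φ m) (φ m)⁻¹}
  one_mem' := by simp
  mul_mem' {x y} hx hy := by
    have h : SemiconjBy a (φ x * φ y) ((φ x)⁻¹ * (φ y)⁻¹) := hx.mul_right hy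
    rwa [← map_inv, ← map_inv, ← map_mul, ← map_mul, ← mul_inv, map_inv] at h
  inv_mem' {x} hx := by
    change SemiconjBy a (φ x⁻¹) (φ x⁻¹)⁻¹
    simpa only [map_inv] using hx.inv_right

lemma mem_invertedSubgroup {M : Type*} [CommGroup M] {φ : M →* H} {a : H} {m : M} :
    m ∈ invertedSubgroup φ a ↔ SemiconjBy a (φ m) (φ m)⁻¹ :=
  Iff.rfl

end Involutions

/-- The action of `ℤˣ` on a commutative group in which `-1` acts by inversion. -/
def inversionAction (M : Type*) [CommGroup M] : ℤˣ →* MulAut M :=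
  intUnitsLift (MulEquiv.inv M) (by ext; simp)

@[simp]
lemma inversionAction_neg_one {M : Type*} [CommGroup M] (m : M) :
    inversionAction M (-1) m = m⁻¹ := by
  simp [inversionAction]

/-- The generalized dihedral group of a commutative group `M`: the translations by elements of `M`
together with an involution that inverts them. -/
abbrev GeneralizedDihedral (M : Type*) [CommGroup M] : Type _ := M ⋊[inversionAction M] ℤˣ

namespace GeneralizedDihedral

variable {M H : Type*} [CommGroup M] [Group H]

/-- The element of the generalized dihedral group acting on `M` as `m ↦ v * m⁻¹`. -/
def reflection (v : M) : GeneralizedDihedral M := ⟨v, -1⟩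

lemma reflection_mul_reflection (u v : M) : reflection u * reflection v = inl (u * v⁻¹) := by
  ext <;> simp [reflection]

lemma reflection_mul_self (v : M) : reflection v * reflection v = 1 := by
  rw [reflection_mul_reflection, mul_inv_cancel, map_one]

lemma range_eq_top_of_inl_mem {f : H →* GeneralizedDihedral M} (hinl : ∀ m, inl m ∈ f.range)
    {v : M} (hv : reflection v ∈ f.range) : f.range = ⊤ := by
  refine (Subgroup.eq_top_iff' _).2 fun ⟨m, u⟩ ↦ ?_
  rcases Int.units_eq_one_or u with rfl | rfl
  · exact hinl m
  · have h : (⟨m, -1⟩ : GeneralizedDihedral M) = inl (m * v⁻¹) * reflection v := by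
      ext <;> simp [reflection]
    exact h ▸ mul_mem (hinl _) hv

/-- The homomorphism out of a generalized dihedral group given by a homomorphism on translations
and an involution inverting its values. -/
def lift (φ : M →* H) (a : H) (ha : a * a = 1) (hφ : ∀ m, SemiconjBy a (φ m) (φ m)⁻¹) :
    GeneralizedDihedral M →* H :=
  SemidirectProduct.lift φ (intUnitsLift a ha) fun u ↦ by
    ext m
    rcases Int.units_eq_one_or u with rfl | rfl
    · simp
    · simp [(hφ m).eq]

lemma lift_inl (φ : M →* H) (a : H) (ha : a * a = 1) (hφ : ∀ m, SemiconjBy a (φ m) (φ m)⁻¹)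
    (m : M) : lift φ a ha hφ (inl m) = φ m :=
  SemidirectProduct.lift_inl _ _ _ m

lemma lift_reflection (φ : M →* H) (a : H) (ha : a * a = 1)
    (hφ : ∀ m, SemiconjBy a (φ m) (φ m)⁻¹) (v : M) :
    lift φ a ha hφ (reflection v) = φ v * a := by
  rw [reflection, mk_eq_inl_mul_inr, map_mul, lift_inl, lift,
    SemidirectProduct.lift_inr, intUnitsLift_neg_one]

end GeneralizedDihedral

section TranslationSubgroup

variable {Γ N C : Type*} [Group Γ] [Group N] [Group C] {φ : C →* MulAut N}

/-- The preimage of the normal factor under a homomorphism to a semidirect product. -/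
def translationSubgroup (f : Γ →* N ⋊[φ] C) : Subgroup Γ :=
  (rightHom.comp f).ker

instance (f : Γ →* N ⋊[φ] C) : (translationSubgroup f).Normal :=
  MonoidHom.normal_ker _

lemma mem_translationSubgroup_of_eq_inl {f : Γ →* N ⋊[φ] C} {x : Γ}
    {n : N} (h : f x = inl n) : x ∈ translationSubgroup f := by
  rw [translationSubgroup, MonoidHom.mem_ker, MonoidHom.comp_apply, h, rightHom_inl]

lemma index_translationSubgroup {f : Γ →* N ⋊[φ] C}
    (hf : Function.Surjective f) : (translationSubgroup f).index = Nat.card C := by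
  have hsurj : Function.Surjective (rightHom.comp f) := rightHom_surjective.comp hf
  rw [translationSubgroup, Subgroup.index_ker, MonoidHom.range_eq_top.2 hsurj, Subgroup.card_top]

/-- The restriction of a homomorphism to a semidirect product to the preimage of the normal
factor. -/
def translationPart (f : Γ →* N ⋊[φ] C) :
    translationSubgroup f →* N where
  toFun x := (f x).left
  map_one' := by simp
  map_mul' x y := by
    have hx : (f x).right = 1 := x.2
    simp [hx]

lemma translationPart_surjective {f : Γ →* N ⋊[φ] C}
    (hf : Function.Surjective f) : Function.Surjective (translationPart f) := fun n ↦ by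
  obtain ⟨x, hx⟩ := hf (inl n)
  exact ⟨⟨x, mem_translationSubgroup_of_eq_inl hx⟩, congrArg SemidirectProduct.left hx⟩

lemma ker_translationPart_le_commutator {f : Γ →* N ⋊[φ] C}
    (hker : f.ker ≤ ⁅translationSubgroup f, translationSubgroup f⁆) :
    (translationPart f).ker ≤ commutator (translationSubgroup f) := fun x hx ↦ by
  have hfx : (x : Γ) ∈ f.ker := SemidirectProduct.ext hx x.2
  have hx' := hker hfx
  rw [← Subgroup.map_subtype_commutator] at hx'
  exact (Subgroup.mem_map_iff_mem (translationSubgroup f).subtype_injective).1 hx'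

/-- The abelianization of the preimage of the normal factor, when that factor is commutative and
the kernel consists of products of commutators of that preimage. -/
noncomputable def abelianizationTranslationSubgroupEquiv {A : Type*} [CommGroup A]
    {ψ : C →* MulAut A} {f : Γ →* A ⋊[ψ] C} (hf : Function.Surjective f)
    (hker : f.ker ≤ ⁅translationSubgroup f, translationSubgroup f⁆) :
    Abelianization (translationSubgroup f) ≃* A :=
  (QuotientGroup.quotientMulEquivOfEq <| (Abelianization.commutator_subset_ker _).antisymm
    (ker_translationPart_le_commutator hker)).trans
    (QuotientGroup.quotientKerEquivOfSurjective _ (translationPart_surjective hf))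

end TranslationSubgroup

/-- The natural map from the abelianization of a subgroup `K` of `Γ` to `Γ ⧸ ⁅K, K⁆`. -/
def abelianizationToQuotient {Γ : Type*} [Group Γ] (K : Subgroup Γ) [K.Normal] :
    Abelianization K →* Γ ⧸ ⁅K, K⁆ :=
  QuotientGroup.map _ _ K.subtype <|
    Subgroup.map_le_iff_le_comap.1 K.map_subtype_commutator.le

lemma abelianizationToQuotient_of {Γ : Type*} [Group Γ] (K : Subgroup Γ) [K.Normal] (x : K) :
    abelianizationToQuotient K (Abelianization.of x) = QuotientGroup.mk' ⁅K, K⁆ x :=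
  rfl

/-- The group `ℤ^ι × ℤ/nℤ`, written multiplicatively. -/
abbrev FreeTimesCyclic (ι : Type*) (n : ℕ) : Type _ := Multiplicative ((ι → ℤ) × ZMod n)

namespace FreeTimesCyclic

variable {ι : Type*} {n : ℕ} {B : Type*} [CommGroup B]

/-- The standard basis elements of the free factor of `ℤ^ι × ℤ/nℤ`. -/
def basis [DecidableEq ι] (i : ι) : FreeTimesCyclic ι n := .ofAdd (Pi.single i 1, 0)

variable (ι n) in
/-- The standard generator of the cyclic factor of `ℤ^ι × ℤ/nℤ`. -/
def cyclicGen : FreeTimesCyclic ι n := .ofAdd (0, 1)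

lemma cyclicGen_pow : cyclicGen ι n ^ n = 1 := by
  rw [cyclicGen, ← ofAdd_nsmul]
  simp

lemma eq_prod_basis_zpow_mul_cyclicGen_zpow [Fintype ι] [DecidableEq ι] (v : ι → ℤ) (k : ℤ) :
    (.ofAdd (v, (k : ZMod n)) : FreeTimesCyclic ι n) =
      (∏ i, basis i ^ v i) * cyclicGen ι n ^ k := by
  simp only [basis, cyclicGen, ← ofAdd_zsmul, ← ofAdd_sum, ← ofAdd_add]
  congr 1
  ext i <;> simp [Prod.fst_sum, Prod.snd_sum, Finset.sum_apply, Pi.single_apply]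

lemma mem_of_basis_mem_of_cyclicGen_mem [Finite ι] [DecidableEq ι]
    {K : Subgroup (FreeTimesCyclic ι n)} (hbasis : ∀ i, basis i ∈ K)
    (hcyclicGen : cyclicGen ι n ∈ K) (m : FreeTimesCyclic ι n) : m ∈ K := by
  have := Fintype.ofFinite ι
  obtain ⟨v, c⟩ := m
  obtain ⟨k, rfl⟩ := ZMod.intCast_surjective c
  change .ofAdd (v, (k : ZMod n)) ∈ K
  rw [eq_prod_basis_zpow_mul_cyclicGen_zpow]
  exact mul_mem (prod_mem fun i _ ↦ zpow_mem (hbasis i) _) (zpow_mem hcyclicGen k)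

lemma closure_basis_cyclicGen :
    Subgroup.closure {basis 0, basis 1, cyclicGen (Fin 2) n} = ⊤ := by
  refine (Subgroup.eq_top_iff' _).2 <| mem_of_basis_mem_of_cyclicGen_mem (fun i ↦ ?_) ?_
  · fin_cases i <;> exact Subgroup.subset_closure (by simp)
  · exact Subgroup.subset_closure (by simp)

lemma basis_ne_inv [DecidableEq ι] (i : ι) : (basis i : FreeTimesCyclic ι n) ≠ (basis i)⁻¹ := by
  intro h
  have h_coord : (1 : ℤ) = -1 := by simpa [basis] using congrArg (fun m ↦ m.toAdd.1 i) h
  lia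

/-- The homomorphism to a commutative group with prescribed values on the standard generators. -/
def lift [Fintype ι] (x : ι → B) (z : B) (hz : z ^ n = 1) : FreeTimesCyclic ι n →* B :=
  AddMonoidHom.toMultiplicativeLeft <|
    (Fintype.linearCombination ℤ (Additive.ofMul ∘ x)).toAddMonoidHom.coprod
      (ZMod.lift n ⟨zmultiplesHom _ (.ofMul z), by simp [← ofMul_pow, hz]⟩)

lemma lift_basis [Fintype ι] [DecidableEq ι] (x : ι → B) (z : B) (hz : z ^ n = 1) (i : ι) :
    lift x z hz (basis i) = x i := by
  simp [lift, basis]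

lemma lift_cyclicGen [Fintype ι] (x : ι → B) (z : B) (hz : z ^ n = 1) :
    lift x z hz (cyclicGen ι n) = z := by
  have h := ZMod.lift_coe n ⟨zmultiplesHom _ (Additive.ofMul z), by simp [← ofMul_pow, hz]⟩ 1
  rw [Int.cast_one] at h
  simp [lift, cyclicGen, h]

end FreeTimesCyclic

namespace DeltaFive

variable {H : Type*} [Group H]

/-- The increasing quadruple of the elements of `Fin 5` other than `i`. -/
def quadOmitting (i : Fin 5) : Quad 5 :=
  (i.succAbove 0, i.succAbove 1, i.succAbove 2, i.succAbove 3)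

lemma quadOmitting_injective : Function.Injective quadOmitting := by decide

lemma qInc_quadOmitting (i : Fin 5) : qInc (quadOmitting i) := by
  unfold qInc
  revert i
  decide

lemma qInc_iff_mem_range (q : Quad 5) : qInc q ↔ q ∈ Set.range quadOmitting := by
  refine ⟨?_, fun ⟨i, hi⟩ ↦ hi ▸ qInc_quadOmitting i⟩
  unfold qInc
  revert q
  decide +kernel

lemma two_lt_card_inter (i j : Fin 5) :
    2 < (qFinset (quadOmitting i) ∩ qFinset (quadOmitting j)).card := by
  revert i j
  decide

/-- The generator of `Δ_5^4` whose quadruple omits `i`. As `Fin 5` starts at `0`, the generators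
`(1234)`, `(1245)`, `(2345)`, `(1235)`, `(1345)` are `gen 4`, `gen 2`, `gen 0`, `gen 3`, `gen 1`. -/
def gen (i : Fin 5) : Delta 5 := dd (quadOmitting i)

lemma gen_mul_self (i : Fin 5) : gen i * gen i = 1 :=
  PresentedGroup.one_of_mem (rels := deltaRels 5)
    (.inl (.inl (.inr ⟨quadOmitting i, qInc_quadOmitting i, rfl⟩)))

lemma gen_pentagon : gen 4 * gen 2 * gen 0 * gen 3 * gen 1 = 1 :=
  PresentedGroup.one_of_mem (rels := deltaRels 5)
    (.inr ⟨0, 1, 2, 3, 4, by decide, by decide, by decide, by decide, rfl⟩)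

lemma extend_quadOmitting_relator {g : Fin 5 → H} (hsq : ∀ i, g i * g i = 1)
    (hpent : g 4 * g 2 * g 0 * g 3 * g 1 = 1) (r : FreeGroup (Quad 5)) (hr : r ∈ deltaRels 5) :
    FreeGroup.lift (Function.extend quadOmitting g 1) r = 1 := by
  have extend_apply (i : Fin 5) : Function.extend quadOmitting g 1 (quadOmitting i) = g i :=
    quadOmitting_injective.extend_apply g 1 i
  rcases hr with ((⟨q, hq, rfl⟩ | ⟨q, hq, rfl⟩) | ⟨q, q', hq, hq', hcard, rfl⟩) |
    ⟨i, j, k, l, m, hij, hjk, hkl, hlm, rfl⟩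
  · rw [FreeGroup.lift_apply_of]
    exact Function.extend_apply' g (1 : Quad 5 → H) q fun hmem ↦ hq ((qInc_iff_mem_range q).2 hmem)
  · obtain ⟨i, rfl⟩ := (qInc_iff_mem_range q).1 hq
    rw [map_mul, FreeGroup.lift_apply_of, extend_apply, hsq]
  · obtain ⟨i, rfl⟩ := (qInc_iff_mem_range q).1 hq
    obtain ⟨j, rfl⟩ := (qInc_iff_mem_range q').1 hq'
    exact absurd hcard (two_lt_card_inter i j).not_ge
  · obtain ⟨rfl, rfl, rfl, rfl, rfl⟩ : i = 0 ∧ j = 1 ∧ k = 2 ∧ l = 3 ∧ m = 4 := by omega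
    simp only [map_mul, FreeGroup.lift_apply_of]
    rw [← hpent, ← extend_apply 4, ← extend_apply 2, ← extend_apply 0, ← extend_apply 3,
      ← extend_apply 1]
    rfl

/-- The homomorphism from `Δ_5^4` given by five involutions satisfying the pentagon relation. -/
noncomputable def lift (g : Fin 5 → H) (hsq : ∀ i, g i * g i = 1)
    (hpent : g 4 * g 2 * g 0 * g 3 * g 1 = 1) : Delta 5 →* H :=
  PresentedGroup.toGroup (extend_quadOmitting_relator hsq hpent)

lemma lift_gen (g : Fin 5 → H) (hsq : ∀ i, g i * g i = 1)
    (hpent : g 4 * g 2 * g 0 * g 3 * g 1 = 1) (i : Fin 5) : lift g hsq hpent (gen i) = g i :=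
  (PresentedGroup.toGroup.of _).trans (quadOmitting_injective.extend_apply g 1 i)

lemma gen_three_eq : gen 3 = (gen 4 * gen 2 * gen 0)⁻¹ * (gen 1)⁻¹ := by
  rw [eq_mul_inv_iff_mul_eq, eq_comm, inv_eq_iff_mul_eq_one, ← mul_assoc, gen_pentagon]

lemma hom_ext {f f' : Delta 5 →* H} (h₄ : f (gen 4) = f' (gen 4))
    (h₄₂ : f (gen 4 * gen 2) = f' (gen 4 * gen 2)) (h₄₀ : f (gen 4 * gen 0) = f' (gen 4 * gen 0))
    (h₁ : f (gen 1) = f' (gen 1)) : f = f' := by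
  have h₂ : f (gen 2) = f' (gen 2) := by rwa [map_mul, map_mul, h₄, mul_right_inj] at h₄₂
  have h₀ : f (gen 0) = f' (gen 0) := by rwa [map_mul, map_mul, h₄, mul_right_inj] at h₄₀
  have h₃ : f (gen 3) = f' (gen 3) := by
    simp only [gen_three_eq, map_mul, map_inv, h₄, h₂, h₀, h₁]
  refine PresentedGroup.ext fun q ↦ ?_
  by_cases hq : qInc q
  · obtain ⟨i, rfl⟩ := (qInc_iff_mem_range q).1 hq
    change f (gen i) = f' (gen i)
    fin_cases i <;> assumption
  · have hq_one : (PresentedGroup.of q : Delta 5) = 1 :=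
      PresentedGroup.one_of_mem (.inl (.inl (.inl ⟨q, hq, rfl⟩)))
    rw [hq_one, map_one, map_one]

section ToDihedral

open GeneralizedDihedral

variable {M : Type*} [CommGroup M] {p q z : M} (hz : z ^ 2 = 1)

variable (p q) in
/-- The homomorphism from `Δ_5^4` to a generalized dihedral group that takes `(1234)(1245)`,
`(1234)(2345)` and `(1345)` to the translations by `p`, `q` and `z`, and `(1234)` to a reflection.
The pentagon relation then forces the image of `(1235)`. -/
noncomputable def toDihedral : Delta 5 →* GeneralizedDihedral M :=
  lift ![reflection q⁻¹, inl z, reflection p⁻¹, reflection (p * q⁻¹ * z), reflection 1]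
    (by simp [Fin.forall_fin_succ, reflection_mul_self, ← map_mul, (sq z).symm.trans hz])
    (by
      change reflection 1 * reflection p⁻¹ * reflection q⁻¹ * reflection (p * q⁻¹ * z) * inl z = 1
      rw [mul_assoc (_ * _) (reflection _) (reflection _), reflection_mul_reflection,
        reflection_mul_reflection, ← map_mul, ← map_mul, one_mul, inv_inv, ← mul_assoc,
        mul_right_comm, mul_inv_cancel, map_one])

lemma toDihedral_gen_four : toDihedral p q hz (gen 4) = reflection 1 := lift_gen ..

lemma toDihedral_gen_two : toDihedral p q hz (gen 2) = reflection p⁻¹ := lift_gen ..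

lemma toDihedral_gen_zero : toDihedral p q hz (gen 0) = reflection q⁻¹ := lift_gen ..

lemma toDihedral_gen_one : toDihedral p q hz (gen 1) = inl z := lift_gen ..

lemma toDihedral_gen_four_mul_gen_two : toDihedral p q hz (gen 4 * gen 2) = inl p := by
  rw [map_mul, toDihedral_gen_four, toDihedral_gen_two, reflection_mul_reflection, inv_inv,
    one_mul]

lemma toDihedral_gen_four_mul_gen_zero : toDihedral p q hz (gen 4 * gen 0) = inl q := by
  rw [map_mul, toDihedral_gen_four, toDihedral_gen_zero, reflection_mul_reflection, inv_inv,
    one_mul]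

lemma gen_four_mul_gen_mem_translationSubgroup {i : Fin 5} (hi : i ≠ 1) :
    gen 4 * gen i ∈ translationSubgroup (toDihedral p q hz) := by
  obtain ⟨v, hv⟩ : ∃ v, toDihedral p q hz (gen i) = reflection v := by
    rw [toDihedral, lift_gen]
    fin_cases i
    · exact ⟨_, rfl⟩
    · exact absurd rfl hi
    all_goals exact ⟨_, rfl⟩
  apply mem_translationSubgroup_of_eq_inl
  rw [map_mul, toDihedral_gen_four, hv, reflection_mul_reflection]

lemma toDihedral_surjective (hgen : Subgroup.closure {p, q, z} = ⊤) :
    Function.Surjective (toDihedral p q hz) := by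
  have hle : Subgroup.closure {p, q, z} ≤ (toDihedral p q hz).range.comap inl := by
    rw [Subgroup.closure_le]
    rintro m (rfl | rfl | rfl)
    · exact ⟨_, toDihedral_gen_four_mul_gen_two hz⟩
    · exact ⟨_, toDihedral_gen_four_mul_gen_zero hz⟩
    · exact ⟨_, toDihedral_gen_one hz⟩
  rw [← MonoidHom.range_eq_top]
  exact range_eq_top_of_inl_mem (fun m ↦ hle (hgen ▸ Subgroup.mem_top m))
    ⟨_, toDihedral_gen_four hz⟩

end ToDihedral

section FromDihedral

open FreeTimesCyclic

variable {K : Subgroup (Delta 5)}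

lemma gen_one_inv :
    (gen 1)⁻¹ = (gen 4 * gen 2) * (gen 4 * gen 0)⁻¹ * (gen 4 * gen 3) := by
  calc (gen 1)⁻¹ = gen 4 * gen 2 * gen 0 * gen 3 := inv_eq_of_mul_eq_one_left gen_pentagon
    _ = gen 4 * gen 2 * (gen 0)⁻¹ * gen 3 := by
      rw [inv_eq_of_mul_eq_one_left (gen_mul_self 0)]
    _ = (gen 4 * gen 2) * (gen 4 * gen 0)⁻¹ * (gen 4 * gen 3) := by group

lemma gen_one_mem (hK : ∀ i ≠ 1, gen 4 * gen i ∈ K) : gen 1 ∈ K := by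
  rw [← inv_mem_iff, gen_one_inv]
  exact mul_mem (mul_mem (hK 2 (by decide)) (inv_mem (hK 0 (by decide)))) (hK 3 (by decide))

/-- The homomorphism from `ℤ² × ℤ/2ℤ` that takes the standard generators to the classes of
`(1234)(1245)`, `(1234)(2345)` and `(1345)`. -/
def toAbelianization (hK : ∀ i ≠ 1, gen 4 * gen i ∈ K) :
    FreeTimesCyclic (Fin 2) 2 →* Abelianization K :=
  FreeTimesCyclic.lift
    ![.of ⟨gen 4 * gen 2, hK 2 (by decide)⟩, .of ⟨gen 4 * gen 0, hK 0 (by decide)⟩]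
    (.of ⟨gen 1, gen_one_mem hK⟩)
    (by
      have hsq : (⟨gen 1, gen_one_mem hK⟩ : K) ^ 2 = 1 :=
        Subtype.ext ((sq _).trans (gen_mul_self 1))
      rw [← map_pow, hsq, map_one])

variable [K.Normal]

variable (K) in
/-- The elements of the abelianization of `K` that are inverted by conjugation by `(1234)`. -/
def invertedByGenFour : Subgroup (Abelianization K) :=
  invertedSubgroup (abelianizationToQuotient K) (QuotientGroup.mk' ⁅K, K⁆ (gen 4))

lemma of_gen_four_mul_gen_mem_invertedByGenFour {i : Fin 5} (hi : gen 4 * gen i ∈ K) :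
    Abelianization.of ⟨gen 4 * gen i, hi⟩ ∈ invertedByGenFour K :=
  (semiconjBy_mul_inv_of_mul_self (gen_mul_self 4) (gen_mul_self i)).map (QuotientGroup.mk' ⁅K, K⁆)

lemma of_gen_one_mem_invertedByGenFour (hK : ∀ i ≠ 1, gen 4 * gen i ∈ K) :
    Abelianization.of ⟨gen 1, gen_one_mem hK⟩ ∈ invertedByGenFour K := by
  have h_inv : (⟨gen 1, gen_one_mem hK⟩ : K)⁻¹ = ⟨gen 4 * gen 2, hK 2 (by decide)⟩ *
      ⟨gen 4 * gen 0, hK 0 (by decide)⟩⁻¹ * ⟨gen 4 * gen 3, hK 3 (by decide)⟩ :=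
    Subtype.ext gen_one_inv
  rw [← inv_mem_iff, ← map_inv, h_inv, map_mul, map_mul, map_inv]
  exact mul_mem (mul_mem (of_gen_four_mul_gen_mem_invertedByGenFour _)
    (inv_mem (of_gen_four_mul_gen_mem_invertedByGenFour _)))
    (of_gen_four_mul_gen_mem_invertedByGenFour _)

lemma toAbelianization_mem_invertedByGenFour (hK : ∀ i ≠ 1, gen 4 * gen i ∈ K)
    (m : FreeTimesCyclic (Fin 2) 2) : toAbelianization hK m ∈ invertedByGenFour K := by
  refine mem_of_basis_mem_of_cyclicGen_mem (K := (invertedByGenFour K).comap (toAbelianization hK))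
    (fun i ↦ ?_) ?_ m
  · rw [Subgroup.mem_comap, toAbelianization, lift_basis]
    fin_cases i <;> exact of_gen_four_mul_gen_mem_invertedByGenFour _
  · rw [Subgroup.mem_comap, toAbelianization, lift_cyclicGen]
    exact of_gen_one_mem_invertedByGenFour hK

/-- The map `toDihedral` for the standard generators of `ℤ² × ℤ/2ℤ`. -/
noncomputable abbrev toLatticeDihedral :
    Delta 5 →* GeneralizedDihedral (FreeTimesCyclic (Fin 2) 2) :=
  toDihedral (basis 0) (basis 1) cyclicGen_pow

/-- The homomorphism induced by `toAbelianization` on the generalized dihedral group, with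
`(1234)` as the image of the reflection at `1`. -/
def fromDihedral (hK : ∀ i ≠ 1, gen 4 * gen i ∈ K) :
    GeneralizedDihedral (FreeTimesCyclic (Fin 2) 2) →* Delta 5 ⧸ ⁅K, K⁆ :=
  GeneralizedDihedral.lift ((abelianizationToQuotient K).comp (toAbelianization hK))
    (QuotientGroup.mk' ⁅K, K⁆ (gen 4)) (by rw [← map_mul, gen_mul_self, map_one])
    fun m ↦ mem_invertedSubgroup.1 (toAbelianization_mem_invertedByGenFour hK m)

lemma fromDihedral_inl (hK : ∀ i ≠ 1, gen 4 * gen i ∈ K) (m : FreeTimesCyclic (Fin 2) 2) :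
    fromDihedral hK (inl m) = abelianizationToQuotient K (toAbelianization hK m) :=
  GeneralizedDihedral.lift_inl ..

lemma fromDihedral_comp_toLatticeDihedral (hK : ∀ i ≠ 1, gen 4 * gen i ∈ K) :
    (fromDihedral hK).comp toLatticeDihedral = QuotientGroup.mk' ⁅K, K⁆ := by
  apply hom_ext <;> rw [MonoidHom.comp_apply]
  · rw [toDihedral_gen_four, fromDihedral, GeneralizedDihedral.lift_reflection, map_one, one_mul]
  · rw [toDihedral_gen_four_mul_gen_two, fromDihedral_inl, toAbelianization, lift_basis]
    exact abelianizationToQuotient_of K _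
  · rw [toDihedral_gen_four_mul_gen_zero, fromDihedral_inl, toAbelianization, lift_basis]
    exact abelianizationToQuotient_of K _
  · rw [toDihedral_gen_one, fromDihedral_inl, toAbelianization, lift_cyclicGen]
    exact abelianizationToQuotient_of K _

lemma ker_toLatticeDihedral_le_commutator (hK : ∀ i ≠ 1, gen 4 * gen i ∈ K) :
    toLatticeDihedral.ker ≤ ⁅K, K⁆ := by
  rw [← QuotientGroup.ker_mk' ⁅K, K⁆, ← fromDihedral_comp_toLatticeDihedral hK,
    ← MonoidHom.comap_ker]
  exact Subgroup.comap_mono bot_le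

lemma toLatticeDihedral_surjective : Function.Surjective toLatticeDihedral :=
  toDihedral_surjective cyclicGen_pow closure_basis_cyclicGen

lemma gen_four_mul_gen_two_ne : gen 4 * gen 2 ≠ gen 2 * gen 4 := fun h ↦ by
  have h_inl : (inl (basis 0) : GeneralizedDihedral (FreeTimesCyclic (Fin 2) 2)) =
      inl (basis 0)⁻¹ := by
    rw [← toDihedral_gen_four_mul_gen_two (q := basis 1) cyclicGen_pow, h, map_mul,
      toDihedral_gen_four, toDihedral_gen_two, GeneralizedDihedral.reflection_mul_reflection,
      inv_one, mul_one]
  exact basis_ne_inv 0 (inl_injective h_inl)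

end FromDihedral

end DeltaFive

open DeltaFive FreeTimesCyclic in
/-- The group `Δ_5^4` has a subgroup `G` of index 2 whose abelianization is isomorphic to
`ℤ² ⊕ ℤ/2ℤ`; consequently `Δ_5^4` is an infinite non-commutative group. -/
theorem delta_five_infinite_noncomm :
    (∃ G : Subgroup (Delta 5), G.index = 2 ∧
      Nonempty (Abelianization ↥G ≃* Multiplicative ((Fin 2 → ℤ) × ZMod 2))) ∧
    Infinite (Delta 5) ∧ ∃ a b : Delta 5, a * b ≠ b * a := by
  have h_surj := toLatticeDihedral_surjective
  have h_ker : toLatticeDihedral.ker ≤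
      ⁅translationSubgroup toLatticeDihedral, translationSubgroup toLatticeDihedral⁆ :=
    ker_toLatticeDihedral_le_commutator fun _ ↦
      gen_four_mul_gen_mem_translationSubgroup cyclicGen_pow
  have h_index : (translationSubgroup toLatticeDihedral).index = 2 := by
    rw [index_translationSubgroup h_surj, Nat.card_eq_fintype_card, Fintype.card_units_int]
  have : Infinite (FreeTimesCyclic (Fin 2) 2) :=
    inferInstanceAs (Infinite ((Fin 2 → ℤ) × ZMod 2))
  have : Infinite (GeneralizedDihedral (FreeTimesCyclic (Fin 2) 2)) :=
    .of_injective _ inl_injective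
  exact ⟨⟨_, h_index, ⟨abelianizationTranslationSubgroupEquiv h_surj h_ker⟩⟩,
    .of_surjective _ h_surj, gen 4, gen 2, gen_four_mul_gen_two_ne⟩
end
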